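/- arXiv:2012.07935 — 4 statements merged into one kernel-verified Lean document; each statement's English description precedes it below -/
import Mathlib

section
/- Let X_1, …, X_k, with k ≥ 2 a power of 2, be nonnegative continuous MHR random variables with finite expectations; run Algorithm 1 on them, obtaining first output β₁ and surviving index i*. Then for every ε ∈ (0, 1/16): Σ_{i ∈ {1,…,k}, i ≠ i*} Con[X_i ≥ log₂(1/ε) · β₁] ≤ 8 · √ε · log₂(1/ε) · β₁. -/
open MeasureTheory ProbabilityTheory

/-- The top `1/p`-quantile of the random variable `X` under `μ`:
`α_p(X) = sup {τ : Pr[X > τ] ≥ 1/p}`. -/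
noncomputable def alphaQ {Ω : Type*} [MeasurableSpace Ω] (μ : Measure Ω) (X : Ω → ℝ) (p : ℝ) : ℝ :=
  sSup {τ : ℝ | ENNReal.ofReal (1 / p) ≤ μ {ω | τ < X ω}}

/-- The largest of the (nonnegative) values `v i`, `i ∈ s`. -/
noncomputable def fmax {ι : Type*} (s : Finset ι) (v : ι → ℝ) : ℝ :=
  s.fold max 0 v

/-- The second largest of the (nonnegative) values `v i`, `i ∈ s` (for `s` of size ≥ 2). -/
noncomputable def fsmax {ι : Type*} [DecidableEq ι] (s : Finset ι) (v : ι → ℝ) : ℝ :=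
  s.fold max 0 fun i => (s.erase i).fold max 0 fun j => min (v i) (v j)

/-- A run of Algorithm 1 on the `k = 2^K` random variables `X_0, …, X_{k-1}`:
`Q 0` is the full index set; in round `t` (`0 ≤ t < K`) the surviving set `Q (t+1) ⊆ Q t` has
size `k/2^{t+1}` and consists of indices of `Q t` with the largest values of
`α_{√(k/2^t)}(X_i)`; `βt t` is the `(k/2^{t+1}+1)`-st largest such value, i.e. the largest
value of `α_{√(k/2^t)}(X_j)` over eliminated `j ∈ Q t \ Q (t+1)`.  `istar` is the unique
surviving index, and the outputs are `β₁ = max_{t < K} βt t` and `β₂ = α_{√2}(X_{istar})`. -/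
def AlgoRun {Ω : Type*} [MeasurableSpace Ω] (μ : Measure Ω) (K : ℕ)
    (X : Fin (2 ^ K) → Ω → ℝ) (Q : ℕ → Finset (Fin (2 ^ K))) (βt : ℕ → ℝ)
    (istar : Fin (2 ^ K)) (β₁ β₂ : ℝ) : Prop :=
  Q 0 = Finset.univ ∧
  (∀ t, t < K →
    Q (t + 1) ⊆ Q t ∧
    (Q (t + 1)).card = 2 ^ (K - (t + 1)) ∧
    (∀ i ∈ Q (t + 1), ∀ j ∈ Q t, j ∉ Q (t + 1) →
      alphaQ μ (X j) (Real.sqrt ((2 ^ K : ℝ) / 2 ^ t)) ≤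
        alphaQ μ (X i) (Real.sqrt ((2 ^ K : ℝ) / 2 ^ t))) ∧
    βt t = (Q t \ Q (t + 1)).fold max 0
      (fun j => alphaQ μ (X j) (Real.sqrt ((2 ^ K : ℝ) / 2 ^ t)))) ∧
  Q K = {istar} ∧
  β₁ = (Finset.range K).fold max 0 βt ∧
  β₂ = alphaQ μ (X istar) (Real.sqrt 2)

/-- `X` is a (nonnegative) continuous random variable with monotone hazard rate: it has a
density `f` (w.r.t. Lebesgue measure), and the hazard rate `f x / (1 - F x)` is non-decreasing
on `{x | F x < 1}`, where `F` is the CDF of `X`. -/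
def IsMHR {Ω : Type*} [MeasurableSpace Ω] (μ : Measure Ω) (X : Ω → ℝ) : Prop :=
  ∃ f : ℝ → ℝ, (∀ x, 0 ≤ f x) ∧
    Measure.map X μ = (volume : Measure ℝ).withDensity (fun x => ENNReal.ofReal (f x)) ∧
    ∀ x y : ℝ, x ≤ y → (μ {ω | X ω ≤ x}).toReal < 1 → (μ {ω | X ω ≤ y}).toReal < 1 →
      f x / (1 - (μ {ω | X ω ≤ x}).toReal) ≤ f y / (1 - (μ {ω | X ω ≤ y}).toReal)

/-- `Con[X ≥ x] = E[X · 1{X ≥ x}]`. -/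
noncomputable def tailCon {Ω : Type*} [MeasurableSpace Ω] (μ : MeasureTheory.Measure Ω)
    (X : Ω → ℝ) (x : ℝ) : ℝ :=
  ∫ ω in {ω | x ≤ X ω}, X ω ∂μ

open Filter Topology in
lemma S_rpow (S h : ℝ → ℝ) (hanti : Antitone S) (hS0 : S 0 = 1) (hnn : ∀ x, 0 ≤ S x)
    (hmono : ∀ x y, x ≤ y → 0 < S y → h x ≤ h y)
    (hlow : ∀ x y, x ≤ y → 0 < S y → (y - x) * (h x * S y) ≤ S x - S y)
    (hup : ∀ x y, x ≤ y → 0 < S y → S x - S y ≤ (y - x) * (h y * S x))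
    (hh : ∀ x, 0 ≤ h x)
    (β s : ℝ) (hβ : 0 < β) (hs : 1 ≤ s) : S (s * β) ≤ S β ^ s := by
  rcases (hnn (s * β)).eq_or_lt with h0 | hpos
  · rw [← h0]; exact Real.rpow_nonneg (hnn _) _
  have hβs : β ≤ s * β := by nlinarith
  have hSβ : 0 < S β := lt_of_lt_of_le hpos (hanti hβs)
  set c := h β with hc
  have hc0 : 0 ≤ c := hh β
  have key1 : S (s * β) * Real.exp (c * (s * β - β)) ≤ S β := by
    have ht := (Real.tendsto_one_add_div_pow_exp (c * (s * β - β))).const_mul (S (s * β))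
    refine le_of_tendsto ht ?_
    filter_upwards [eventually_gt_atTop 0] with n hn
    have hn' : (0:ℝ) < n := by exact_mod_cast hn
    set d := (s * β - β) / n with hd
    have hd0 : 0 ≤ d := div_nonneg (by linarith) hn'.le
    have hnd : n * d = s * β - β := by rw [hd]; field_simp
    have : ∀ m : ℕ, m ≤ n → S (β + m * d) * (1 + c * d) ^ m ≤ S β := by
      intro m
      induction m with
      | zero => intro _; simp
      | succ m ih =>
        intro hm
        have ih := ih (by omega)
        have hm' : ((m + 1 : ℕ) : ℝ) ≤ n := by exact_mod_cast hm
        have hpos' : 0 < S (β + (m + 1 : ℕ) * d) := by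
          refine lt_of_lt_of_le hpos (hanti ?_)
          have := mul_le_mul_of_nonneg_right hm' hd0
          linarith
        have hxy : β + m * d ≤ β + (m + 1 : ℕ) * d := by push_cast; linarith
        have hposm : 0 < S (β + m * d) := lt_of_lt_of_le hpos' (hanti hxy)
        have h1 := hlow _ _ hxy hpos'
        have h2 : c ≤ h (β + m * d) := hmono _ _ (by have : 0 ≤ m * d := by positivity
                                                     linarith) hposm
        have h3 : S (β + (m + 1 : ℕ) * d) * (1 + c * d) ≤ S (β + m * d) := by
          have e : β + ((m + 1 : ℕ):ℝ) * d - (β + m * d) = d := by push_cast; ring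
          rw [e] at h1
          have := mul_le_mul_of_nonneg_left (mul_le_mul_of_nonneg_right h2 hpos'.le) hd0
          linarith
        calc _ = (S (β + (m + 1 : ℕ) * d) * (1 + c * d)) * (1 + c * d) ^ m := by ring
          _ ≤ S (β + m * d) * (1 + c * d) ^ m := by gcongr
          _ ≤ _ := ih
    have := this n le_rfl
    rw [hnd] at this
    have e2 : c * (s * β - β) / n = c * d := by rw [hd]; ring
    rw [e2]
    simpa using this
  have key2 : Real.exp (-(c * β)) ≤ S β := by
    have ht := (Real.tendsto_one_add_div_pow_exp (-(c * β)))
    refine le_of_tendsto ht ?_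
    filter_upwards [eventually_gt_atTop 0, eventually_ge_atTop ⌈c * β⌉₊] with n hn hn2
    have hn' : (0:ℝ) < n := by exact_mod_cast hn
    have hn2' : c * β ≤ n := (Nat.le_ceil _).trans (by exact_mod_cast hn2)
    set d := β / n with hd
    have hd0 : 0 ≤ d := by positivity
    have hnd : n * d = β := by rw [hd]; field_simp
    have hcd : 0 ≤ 1 - c * d := by
      have : c * d = c * β / n := by rw [hd]; ring
      rw [this, sub_nonneg, div_le_one hn']; exact hn2'
    have : ∀ m : ℕ, m ≤ n → (1 - c * d) ^ m ≤ S (m * d) := by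
      intro m
      induction m with
      | zero => intro _; simp [hS0]
      | succ m ih =>
        intro hm
        have ih := ih (by omega)
        have hm' : ((m + 1 : ℕ) : ℝ) ≤ n := by exact_mod_cast hm
        have hle : ((m + 1 : ℕ) : ℝ) * d ≤ β := by
          have := mul_le_mul_of_nonneg_right hm' hd0
          linarith
        have hpos' : 0 < S ((m + 1 : ℕ) * d) := lt_of_lt_of_le hSβ (hanti hle)
        have hxy : m * d ≤ (m + 1 : ℕ) * d := by push_cast; linarith
        have h1 := hup _ _ hxy hpos'
        have h2 : h ((m + 1 : ℕ) * d) ≤ c := hmono _ _ hle hSβ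
        have e : ((m + 1 : ℕ):ℝ) * d - (m * d) = d := by push_cast; ring
        rw [e] at h1
        have := mul_le_mul_of_nonneg_left (mul_le_mul_of_nonneg_right h2 (hnn (m * d))) hd0
        calc (1 - c * d) ^ (m + 1) = (1 - c * d) ^ m * (1 - c * d) := by ring
          _ ≤ S (m * d) * (1 - c * d) := by gcongr
          _ ≤ _ := by linarith
    have := this n le_rfl
    rw [hnd] at this
    have e2 : 1 + -(c * β) / n = 1 - c * d := by rw [hd]; ring
    rw [e2]
    exact this
  have e1 : S β ^ s = S β * S β ^ (s - 1) := by
    rw [← Real.rpow_one_add' hSβ.le (by linarith)]; congr 1; ring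
  rw [e1]
  have h5 : Real.exp (-(c * (s * β - β))) ≤ S β ^ (s - 1) := by
    calc _ = Real.exp (-(c * β)) ^ (s - 1) := by rw [← Real.exp_mul]; congr 1; ring
      _ ≤ _ := Real.rpow_le_rpow (Real.exp_pos _).le key2 (by linarith)
  calc S (s * β) = (S (s * β) * Real.exp (c * (s * β - β))) * Real.exp (-(c * (s * β - β))) := by
        rw [mul_assoc, ← Real.exp_add]; simp
    _ ≤ S β * Real.exp (-(c * (s * β - β))) := by gcongr
    _ ≤ _ := by gcongr

lemma real_X {Ω : Type*} [MeasurableSpace Ω] (μ : Measure Ω) [IsProbabilityMeasure μ]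
    (X : Ω → ℝ) (hm : Measurable X) (x : ℝ) : 1 - (μ {ω | X ω ≤ x}).toReal = μ.real {ω | x < X ω} := by
  have : {ω | x < X ω} = {ω | X ω ≤ x}ᶜ := by ext; simp
  rw [this, probReal_compl_eq_one_sub (measurableSet_le hm measurable_const)]; rfl

lemma MHR_null {Ω : Type*} [MeasurableSpace Ω] (μ : Measure Ω)
    (X : Ω → ℝ) (hm : Measurable X) (hX : IsMHR μ X) (x : ℝ) : μ {ω | X ω = x} = 0 := by
  obtain ⟨f, -, hf, -⟩ := hX
  have : μ {ω | X ω = x} = Measure.map X μ {x} := by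
    rw [Measure.map_apply hm (measurableSet_singleton x)]; rfl
  rw [this, hf]
  exact withDensity_absolutelyContinuous _ _ (by simp)

lemma MHR_S {Ω : Type*} [MeasurableSpace Ω] (μ : Measure Ω) [IsProbabilityMeasure μ]
    (X : Ω → ℝ) (hm : Measurable X) (hnn : ∀ ω, 0 ≤ X ω) (hX : IsMHR μ X) :
    μ.real {ω | 0 < X ω} = 1 ∧
    ∀ β s : ℝ, 0 < β → 1 ≤ s → μ.real {ω | s * β < X ω} ≤ μ.real {ω | β < X ω} ^ s := by
  have hz : μ.real {ω | 0 < X ω} = 1 := by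
    rw [← real_X μ X hm]
    have : {ω | X ω ≤ 0} = {ω | X ω = 0} := by
      ext ω; exact ⟨fun h => le_antisymm h (hnn ω), fun h => le_of_eq h⟩
    rw [this, MHR_null μ X hm hX]; simp
  refine ⟨hz, fun β s hβ hs => ?_⟩
  obtain ⟨f, hf0, hf, hmono⟩ := hX
  have hF : ∀ x, (μ {ω | X ω ≤ x}).toReal < 1 ↔ 0 < μ.real {ω | x < X ω} := by
    intro x; rw [← real_X μ X hm, sub_pos]
  simp only [hF, real_X μ X hm] at hmono
  have hanti : Antitone (fun x => μ.real {ω | x < X ω}) := by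
    intro x y hxy
    exact measureReal_mono (fun ω (h : y < X ω) => lt_of_le_of_lt hxy h)
  have hdiff : ∀ x y, x ≤ y → ENNReal.ofReal (μ.real {ω | x < X ω} - μ.real {ω | y < X ω})
      = ∫⁻ z in Set.Ioc x y, ENNReal.ofReal (f z) := by
    intro x y hxy
    rw [← withDensity_apply _ measurableSet_Ioc, ← hf, Measure.map_apply hm measurableSet_Ioc]
    have e : X ⁻¹' Set.Ioc x y = {ω | x < X ω} \ {ω | y < X ω} := by
      ext ω; simp
    have hsub : {ω | y < X ω} ⊆ {ω | x < X ω} := fun ω (h : y < X ω) => lt_of_le_of_lt hxy h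
    have hd := measureReal_sdiff (μ := μ) hsub (measurableSet_lt measurable_const hm)
    rw [e, ← hd, ofReal_measureReal]
  refine S_rpow (fun x => μ.real {ω | x < X ω}) (fun x => f x / μ.real {ω | x < X ω})
    hanti hz (fun _ => measureReal_nonneg) ?_ ?_ ?_ (fun x => div_nonneg (hf0 x) measureReal_nonneg)
    β s hβ hs
  · intro x y hxy hy
    exact hmono x y hxy (lt_of_lt_of_le hy (hanti hxy)) hy
  · intro x y hxy hy
    have hsub : 0 ≤ μ.real {ω | x < X ω} - μ.real {ω | y < X ω} := sub_nonneg.2 (hanti hxy)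
    rw [← ENNReal.ofReal_le_ofReal_iff hsub, hdiff x y hxy]
    rw [mul_comm, ENNReal.ofReal_mul
      (mul_nonneg (div_nonneg (hf0 x) measureReal_nonneg) measureReal_nonneg), ← Real.volume_Ioc,
      ← setLIntegral_const]
    refine setLIntegral_mono' measurableSet_Ioc fun z hz => ENNReal.ofReal_le_ofReal ?_
    have hzp := lt_of_lt_of_le hy (hanti hz.2)
    calc _ ≤ f z / μ.real {ω | z < X ω} * μ.real {ω | z < X ω} := by
          gcongr ?_ * ?_
          · exact div_nonneg (hf0 z) measureReal_nonneg
          · exact hmono x z hz.1.le (lt_of_lt_of_le hy (hanti hxy)) hzp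
          · exact hanti hz.2
      _ = f z := by field_simp
  · intro x y hxy hy
    have hr : 0 ≤ f y / μ.real {ω | y < X ω} * μ.real {ω | x < X ω} := 
      mul_nonneg (div_nonneg (hf0 y) measureReal_nonneg) measureReal_nonneg
    rw [← ENNReal.ofReal_le_ofReal_iff (mul_nonneg (sub_nonneg.2 hxy) hr), hdiff x y hxy]
    rw [mul_comm, ENNReal.ofReal_mul hr, ← Real.volume_Ioc, ← setLIntegral_const]
    refine setLIntegral_mono' measurableSet_Ioc fun z hz => ENNReal.ofReal_le_ofReal ?_
    have hzp := lt_of_lt_of_le hy (hanti hz.2)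
    dsimp only at hzp
    calc f z = f z / μ.real {ω | z < X ω} * μ.real {ω | z < X ω} := by field_simp
      _ ≤ _ := by
          gcongr ?_ * ?_
          · exact div_nonneg (hf0 y) measureReal_nonneg
          · exact hmono z y hz.2 hzp hy
          · exact hanti hz.1.le

lemma quantile_le {Ω : Type*} [MeasurableSpace Ω] (μ : Measure Ω) [IsProbabilityMeasure μ]
    (X : Ω → ℝ) (hm : Measurable X) (p β : ℝ) (hp : 0 < p) (h : alphaQ μ X p ≤ β) :
    μ.real {ω | β < X ω} ≤ 1 / p := by
  have hp' : 0 < 1 / p := by positivity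
  have hbdd : BddAbove {τ : ℝ | ENNReal.ofReal (1 / p) ≤ μ {ω | τ < X ω}} := by
    by_contra hb
    rw [not_bddAbove_iff] at hb
    have hall : ∀ n : ℕ, ENNReal.ofReal (1 / p) ≤ μ {ω | (n : ℝ) < X ω} := by
      intro n
      obtain ⟨τ, hτ, hn⟩ := hb n
      exact le_trans hτ (measure_mono (fun ω (hω : τ < X ω) => hn.trans hω))
    have hI : (⋂ n : ℕ, {ω | (n : ℝ) < X ω}) = ∅ := by
      ext ω
      simp only [Set.mem_iInter, Set.mem_ofPred_eq, Set.mem_empty_iff_false, iff_false, not_forall,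
        not_lt]
      exact exists_nat_ge (X ω)
    have ha : Antitone (fun n : ℕ => {ω | (n : ℝ) < X ω}) := by
      intro a b hab ω (hω : (b : ℝ) < X ω)
      exact lt_of_le_of_lt (by exact_mod_cast hab) hω
    have ht := tendsto_measure_iInter_atTop (μ := μ)
      (fun n => (measurableSet_lt measurable_const hm).nullMeasurableSet) ha ⟨0, measure_ne_top _ _⟩
    rw [hI, measure_empty] at ht
    have := ge_of_tendsto' ht hall
    simp only [nonpos_iff_eq_zero, ENNReal.ofReal_eq_zero] at this
    linarith
  have hU : {ω | β < X ω} = ⋃ n : ℕ, {ω | β + 1 / ((n : ℝ) + 1) < X ω} := by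
    ext ω
    simp only [Set.mem_ofPred_eq, Set.mem_iUnion]
    constructor
    · intro hω
      obtain ⟨n, hn⟩ := exists_nat_one_div_lt (sub_pos.2 hω)
      exact ⟨n, by linarith⟩
    · rintro ⟨n, hn⟩
      have : (0:ℝ) < 1 / ((n : ℝ) + 1) := by positivity
      linarith
  have hM : Monotone (fun n : ℕ => {ω | β + 1 / ((n : ℝ) + 1) < X ω}) := by
    intro a b hab ω (hω : β + 1 / ((a : ℝ) + 1) < X ω)
    refine lt_of_le_of_lt ?_ hω
    gcongr
  have : μ {ω | β < X ω} ≤ ENNReal.ofReal (1 / p) := by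
    rw [hU, hM.measure_iUnion]
    refine iSup_le fun n => ?_
    by_contra hc
    have h1 := le_csSup hbdd (show β + 1 / ((n : ℝ) + 1) ∈ _ from (not_le.1 hc).le)
    have : (0:ℝ) < 1 / ((n : ℝ) + 1) := by positivity
    unfold alphaQ at h
    linarith
  exact ENNReal.toReal_le_of_le_ofReal hp'.le this

lemma tail_bound {Ω : Type*} [MeasurableSpace Ω] (μ : Measure Ω) [IsProbabilityMeasure μ]
    (X : Ω → ℝ) (hm : Measurable X) (hnn : ∀ ω, 0 ≤ X ω) (hint : Integrable X μ)
    (hX : IsMHR μ X) (β q L : ℝ) (hβ0 : 0 ≤ β) (hq0 : 0 < q) (hq : q ^ 2 ≤ 1 / 2)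
    (hS : μ.real {ω | β < X ω} ≤ q) (hL : 4 ≤ L) :
    tailCon μ X (L * β) ≤ 2 * L * β * q ^ L := by
  obtain ⟨hz, hpow⟩ := MHR_S μ X hm hnn hX
  have hq1 : q < 1 := by nlinarith
  have hβ : 0 < β := by
    rcases hβ0.eq_or_lt with h | h
    · rw [← h, hz] at hS; linarith
    · exact h
  have hlogq : Real.log q ≤ -(1 / 3) := by
    have h1 : Real.log (q ^ 2) ≤ Real.log (1 / 2) := Real.log_le_log (by positivity) hq
    rw [Real.log_pow, one_div, Real.log_inv] at h1
    have := Real.log_two_gt_d9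
    push_cast at h1
    linarith
  have hS' : ∀ s, 1 ≤ s → μ.real {ω | s * β < X ω} ≤ q ^ s := fun s hs =>
    (hpow β s hβ hs).trans (Real.rpow_le_rpow measureReal_nonneg hS (by linarith))
  set a := L * β with ha
  have hset : MeasurableSet {ω | a ≤ X ω} := measurableSet_le measurable_const hm
  have hge : μ.real {ω | a ≤ X ω} ≤ q ^ L := by
    have hsub : {ω | a ≤ X ω} ⊆ {ω | a < X ω} ∪ {ω | X ω = a} := by
      intro ω (hω : a ≤ X ω)
      rcases hω.lt_or_eq with h | h
      · exact Or.inl h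
      · exact Or.inr h.symm
    have h1 := (measureReal_mono (μ := μ) hsub).trans (measureReal_union_le _ _)
    have h2 : μ.real {ω | X ω = a} = 0 := by
      rw [measureReal_def, MHR_null μ X hm hX]; simp
    have := hS' L (by linarith)
    linarith
  have hg : Integrable (fun ω => max (X ω - a) 0) μ := (hint.sub (integrable_const a)).pos_part
  have hlayer : ∫ ω, max (X ω - a) 0 ∂μ ≤ 3 * β * q ^ L := by
    rw [hg.integral_eq_integral_meas_lt (Filter.Eventually.of_forall fun ω => le_max_right _ _)]
    have hneg : Real.log q / β < 0 := div_neg_of_neg_of_pos (by linarith) hβ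
    have hI := (integrableOn_exp_mul_Ioi hneg 0).const_mul (q ^ L)
    calc _ ≤ ∫ t in Set.Ioi (0:ℝ), q ^ L * Real.exp (Real.log q / β * t) := by
          refine integral_mono_of_nonneg (Filter.Eventually.of_forall fun t => measureReal_nonneg)
            hI ?_
          refine (ae_restrict_iff' measurableSet_Ioi).2 (Filter.Eventually.of_forall ?_)
          intro t (ht : 0 < t)
          have e : {ω | t < max (X ω - a) 0} = {ω | (L + t / β) * β < X ω} := by
            ext ω
            have : (L + t / β) * β = a + t := by rw [ha]; field_simp
            simp only [Set.mem_ofPred_eq, lt_max_iff, this]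
            constructor
            · rintro (h | h) <;> linarith
            · intro h; left; linarith
          have htb : 0 < t / β := by positivity
          dsimp only
          rw [e]
          refine (hS' _ (by linarith)).trans (le_of_eq ?_)
          rw [Real.rpow_add hq0, Real.rpow_def_of_pos hq0 (t / β)]
          congr 2; ring
      _ = q ^ L * (β / (- Real.log q)) := by
          rw [integral_const_mul, integral_exp_mul_Ioi hneg]
          have : Real.log q ≠ 0 := by linarith
          simp
          left
          field_simp
      _ ≤ q ^ L * (3 * β) := by
          gcongr
          rw [div_le_iff₀ (by linarith)]
          nlinarith
      _ = _ := by ring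
  have hsplit : tailCon μ X a ≤ ∫ ω, max (X ω - a) 0 ∂μ + a * μ.real {ω | a ≤ X ω} := by
    unfold tailCon
    rw [← integral_indicator hset]
    have e2 : a * μ.real {ω | a ≤ X ω} = ∫ ω, ({ω | a ≤ X ω}.indicator (fun _ => a)) ω ∂μ := by
      rw [integral_indicator_const _ hset, smul_eq_mul, mul_comm]
    have hci : Integrable ({ω | a ≤ X ω}.indicator (fun _ => a)) μ :=
      (integrable_const a).indicator hset
    rw [e2, ← integral_add hg hci]
    refine integral_mono (hint.indicator hset) (hg.add hci) fun ω => ?_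
    by_cases h : a ≤ X ω
    · have h' : ω ∈ {ω | a ≤ X ω} := h
      simp only [Set.indicator_of_mem h', Pi.add_apply]
      have := le_max_left (X ω - a) 0
      linarith
    · have h' : ω ∉ {ω | a ≤ X ω} := h
      simp only [Set.indicator_of_notMem h', Pi.add_apply, add_zero]
      exact le_max_right _ _
  have hqL : 0 < q ^ L := Real.rpow_pos_of_pos hq0 L
  have h6 : a * μ.real {ω | a ≤ X ω} ≤ a * q ^ L :=
    mul_le_mul_of_nonneg_left hge (by positivity)
  have h7 : 3 * (β * q ^ L) ≤ L * (β * q ^ L) :=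
    mul_le_mul_of_nonneg_right (by linarith) (by positivity)
  rw [ha] at h6
  nlinarith

lemma le_fold_max {ι : Type*} (s : Finset ι) (v : ι → ℝ) (i : ι) (hi : i ∈ s) :
    v i ≤ s.fold max 0 v := by
  rw [Finset.le_fold_max]; exact Or.inr ⟨i, hi, le_rfl⟩

/-- For nonnegative continuous MHR random variables `X_1, …, X_k` with
`k = 2^K ≥ 2` and finite expectations, if `β₁` is the first output of Algorithm 1 and `i*` the
surviving index, then for every `ε ∈ (0, 1/16)`:
`Σ_{i ≠ i*} Con[X_i ≥ log₂(1/ε)·β₁] ≤ 8·√ε·log₂(1/ε)·β₁`. -/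
theorem bound_on_sum_of_tails
    {Ω : Type*} [MeasurableSpace Ω] (μ : Measure Ω) [IsProbabilityMeasure μ]
    (K : ℕ) (hK : 1 ≤ K)
    (X : Fin (2 ^ K) → Ω → ℝ)
    (hmeas : ∀ i, Measurable (X i))
    (hnonneg : ∀ i ω, 0 ≤ X i ω)
    (hint : ∀ i, Integrable (X i) μ)
    (hMHR : ∀ i, IsMHR μ (X i))
    (Q : ℕ → Finset (Fin (2 ^ K))) (βt : ℕ → ℝ) (istar : Fin (2 ^ K)) (β₁ β₂ : ℝ)
    (hrun : AlgoRun μ K X Q βt istar β₁ β₂) :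
    ∀ ε : ℝ, 0 < ε → ε < 1 / 16 →
      ∑ i ∈ Finset.univ.erase istar, tailCon μ (X i) (Real.logb 2 (1 / ε) * β₁) ≤
        8 * Real.sqrt ε * Real.logb 2 (1 / ε) * β₁ := by
  intro ε hε hε16
  obtain ⟨hQ0, hstep, hQK, hβ₁, -⟩ := hrun
  set L := Real.logb 2 (1 / ε) with hLdef
  have hL : 4 ≤ L := by
    rw [hLdef, Real.le_logb_iff_rpow_le (by norm_num) (by positivity)]
    rw [le_div_iff₀ hε]
    norm_num
    linarith
  have hβ0 : 0 ≤ β₁ := by rw [hβ₁, Finset.le_fold_max]; exact Or.inl le_rfl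
  have hcard : ∀ t, t ≤ K → (Q t).card = 2 ^ (K - t) := by
    intro t ht
    rcases t with _ | t
    · rw [hQ0]; simp
    · exact (hstep t (by omega)).2.1
  have hdec : ∀ T, T ≤ K → ∑ i ∈ Finset.univ \ Q T, tailCon μ (X i) (L * β₁)
      = ∑ t ∈ Finset.range T, ∑ i ∈ Q t \ Q (t + 1), tailCon μ (X i) (L * β₁) := by
    intro T
    induction T with
    | zero => intro _; rw [hQ0]; simp
    | succ T ih =>
      intro hT
      have hsub := (hstep T (by omega)).1
      rw [Finset.sum_range_succ, ← ih (by omega), ← Finset.sum_union]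
      · congr 1
        ext i
        have := @hsub i
        simp only [Finset.mem_sdiff, Finset.mem_union, Finset.mem_univ, true_and]
        tauto
      · rw [Finset.disjoint_left]
        intro i h1 h2
        simp only [Finset.mem_sdiff] at h1 h2
        exact h1.2 h2.1
  set r := 2 * Real.sqrt ε with hr
  have hsq : 0 < Real.sqrt ε := Real.sqrt_pos.2 hε
  have hr2 : r ≤ 1 / 2 := by
    have : Real.sqrt ε ≤ 1 / 4 := by
      rw [Real.sqrt_le_left (by norm_num)]; norm_num; linarith
    linarith
  have hpiece : ∀ t, t < K → ∑ i ∈ Q t \ Q (t + 1), tailCon μ (X i) (L * β₁)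
      ≤ L * β₁ * r ^ (K - t) := by
    intro t ht
    obtain ⟨hsub, hc, -, hβt⟩ := hstep t ht
    obtain ⟨j, hj⟩ : ∃ j, K - t = j + 1 := ⟨K - t - 1, by omega⟩
    have hm : (2 ^ K : ℝ) / 2 ^ t = 2 ^ (j + 1) := by
      rw [← hj, pow_sub₀ _ (by norm_num) ht.le]; rfl
    rw [hm] at hβt
    set p := Real.sqrt ((2:ℝ) ^ (j + 1)) with hp
    have hp0 : 0 < p := by positivity
    have hpsq : p ^ 2 = 2 ^ (j + 1) := Real.sq_sqrt (by positivity)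
    have hqL : (1 / p) ^ L = Real.sqrt ε ^ (j + 1) := by
      have h2L : (2:ℝ) ^ L = 1 / ε := Real.rpow_logb (by norm_num) (by norm_num) (by positivity)
      have hpL : p ^ L = Real.sqrt (1 / ε) ^ (j + 1) := by
        rw [hp, Real.sqrt_eq_rpow, Real.sqrt_eq_rpow, ← h2L, ← Real.rpow_natCast,
          ← Real.rpow_natCast, ← Real.rpow_mul (by positivity), ← Real.rpow_mul (by positivity),
          ← Real.rpow_mul (by positivity), ← Real.rpow_mul (by positivity)]
        congr 1; ring
      rw [one_div, Real.inv_rpow hp0.le, hpL, one_div, Real.sqrt_inv, inv_pow, inv_inv]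
    have hbound : ∀ i ∈ Q t \ Q (t + 1), tailCon μ (X i) (L * β₁)
        ≤ 2 * L * β₁ * Real.sqrt ε ^ (j + 1) := by
      intro i hi
      have h1 : alphaQ μ (X i) p ≤ β₁ := by
        have a1 := le_fold_max (Q t \ Q (t + 1)) (fun j => alphaQ μ (X j) p) i hi
        have a2 := le_fold_max (Finset.range K) βt t (Finset.mem_range.2 ht)
        rw [← hβt] at a1
        rw [← hβ₁] at a2
        exact a1.trans a2
      rw [← hqL]
      refine tail_bound μ (X i) (hmeas i) (hnonneg i) (hint i) (hMHR i) β₁ (1 / p) L hβ0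
        (by positivity) ?_ (quantile_le μ (X i) (hmeas i) p β₁ hp0 h1) hL
      rw [div_pow, hpsq, one_pow]
      apply one_div_le_one_div_of_le (by norm_num)
      rw [pow_succ]
      have : (1:ℝ) ≤ 2 ^ j := one_le_pow₀ (by norm_num)
      linarith
    have hcd : (Q t \ Q (t + 1)).card = 2 ^ j := by
      rw [Finset.card_sdiff_of_subset hsub, hc, hcard t ht.le, hj,
        show K - (t + 1) = j by omega, pow_succ]
      omega
    refine (Finset.sum_le_card_nsmul _ _ _ hbound).trans (le_of_eq ?_)
    rw [hcd, hj, hr, nsmul_eq_mul]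
    push_cast
    ring
  have hgeo : ∀ n : ℕ, ∑ t ∈ Finset.range n, r ^ (n - t) ≤ 2 * r := by
    intro n
    have hr0 : 0 ≤ r := by positivity
    induction n with
    | zero => simp; exact hr0
    | succ n ih =>
      have e : ∑ t ∈ Finset.range n, r ^ (n + 1 - t) = r * ∑ t ∈ Finset.range n, r ^ (n - t) := by
        rw [Finset.mul_sum]
        refine Finset.sum_congr rfl fun t ht => ?_
        have := Finset.mem_range.1 ht
        rw [show n + 1 - t = (n - t) + 1 by omega, pow_succ']
      rw [Finset.sum_range_succ, e]
      simp
      nlinarith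
  have hfin : Finset.univ.erase istar = Finset.univ \ Q K := by
    rw [hQK, Finset.sdiff_singleton_eq_erase]
  rw [hfin, hdec K le_rfl]
  have hLβ : 0 ≤ L * β₁ := mul_nonneg (by linarith) hβ0
  calc _ ≤ ∑ t ∈ Finset.range K, L * β₁ * r ^ (K - t) :=
        Finset.sum_le_sum fun t ht => hpiece t (Finset.mem_range.1 ht)
    _ = L * β₁ * ∑ t ∈ Finset.range K, r ^ (K - t) := by rw [Finset.mul_sum]
    _ ≤ L * β₁ * (2 * r) := by gcongr; exact hgeo K
    _ ≤ _ := by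
      rw [hr]
      have := mul_nonneg hsq.le hLβ
      nlinarith
end

section
/- Let X_1, …, X_k, with k ≥ 2 a power of 2, be nonnegative continuous MHR random variables with finite expectations; run Algorithm 1 on them, obtaining second output β₂ and surviving index i*. Then for every ε ∈ (0, 1/16): Con[X_{i*} ≥ log₂(1/ε) · β₂] ≤ 6 · √ε · log₂(1/ε) · β₂. -/
open MeasureTheory ProbabilityTheory

lemma blv_cdf_continuous (ν : Measure ℝ) [IsProbabilityMeasure ν] [NullSingletonClass ν] :
    Continuous (cdf ν) := by
  rw [continuous_iff_continuousAt]
  intro x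
  rw [(monotone_cdf ν).continuousAt_iff_leftLim_eq_rightLim, StieltjesFunction.rightLim_eq]
  have h := (cdf ν).measure_singleton x
  rw [measure_cdf, measure_singleton] at h
  have h2 := ENNReal.ofReal_eq_zero.1 h.symm
  exact le_antisymm ((monotone_cdf ν).leftLim_le le_rfl) (by linarith)

lemma blv_nbu (ν : Measure ℝ) [IsProbabilityMeasure ν] (hneg : ν (Set.Iio 0) = 0)
    (f : ℝ → ℝ) (hf : ∀ x, 0 ≤ f x)
    (hν : ν = (volume : Measure ℝ).withDensity (fun x => ENNReal.ofReal (f x)))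
    (hc : Continuous (cdf ν))
    (hh : ∀ x y : ℝ, x ≤ y → cdf ν x < 1 → cdf ν y < 1 →
      f x / (1 - cdf ν x) ≤ f y / (1 - cdf ν y))
    (h0 : cdf ν 0 = 0) (a t : ℝ) (ha : 0 ≤ a) (ht : 0 ≤ t) :
    1 - cdf ν (a + t) ≤ (1 - cdf ν a) * (1 - cdf ν t) := by
  by_contra hcon
  push Not at hcon
  set φ : ℝ → ℝ := fun s => (1 - cdf ν a) * (1 - cdf ν s) - (1 - cdf ν (a + s)) with hφ
  have hφc : Continuous φ := by fun_prop
  have hGa : 0 ≤ 1 - cdf ν a := by linarith [cdf_le_one ν a]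
  -- last time where φ ≥ 0
  obtain ⟨s, ⟨⟨hs0, hst⟩, hsφ⟩, hmax⟩ :=
    (isCompact_Icc.inter_right (isClosed_le continuous_const hφc) :
      IsCompact (Set.Icc 0 t ∩ {s | 0 ≤ φ s})).exists_isGreatest
      ⟨0, ⟨le_rfl, ht⟩, by simp [hφ, h0]⟩
  simp only [Set.mem_ofPred_eq] at hsφ
  have hneg' : ∀ u ∈ Set.Ioc s t, (1 - cdf ν a) * (1 - cdf ν u) < 1 - cdf ν (a + u) := by
    intro u hu
    by_contra hu'
    have := hmax ⟨⟨hs0.trans hu.1.le, hu.2⟩, (by simp only [Set.mem_ofPred_eq, hφ]; linarith)⟩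
    exact absurd hu.1 (not_lt.2 this)
  have hpt : ∀ u ∈ Set.Ioc s t,
      ENNReal.ofReal (1 - cdf ν a) * ENNReal.ofReal (f u) ≤ ENNReal.ofReal (f (a + u)) := by
    intro u hu
    rw [← ENNReal.ofReal_mul hGa]
    apply ENNReal.ofReal_le_ofReal
    have h1 := hneg' u hu
    have h2 : 0 ≤ 1 - cdf ν u := by linarith [cdf_le_one ν u]
    have h3 : 0 < 1 - cdf ν (a + u) := lt_of_le_of_lt (mul_nonneg hGa h2) h1
    have h4 : 0 < 1 - cdf ν u := by
      have := monotone_cdf ν (show u ≤ a + u by linarith)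
      linarith
    have h5 := hh u (a + u) (by linarith) (by linarith) (by linarith)
    rw [div_le_div_iff₀ h4 h3] at h5
    have h6 : (1 - cdf ν a) * (1 - cdf ν u) * f u ≤ (1 - cdf ν (a + u)) * f u :=
      mul_le_mul_of_nonneg_right h1.le (hf u)
    refine le_of_mul_le_mul_right ?_ h4
    nlinarith
  have hIoc : ∀ x y : ℝ, ∫⁻ u in Set.Ioc x y, ENNReal.ofReal (f u)
      = ENNReal.ofReal (cdf ν y - cdf ν x) := by
    intro x y
    rw [← withDensity_apply _ measurableSet_Ioc, ← hν, ← StieltjesFunction.measure_Ioc, measure_cdf]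
  have hshift : ∫⁻ u in Set.Ioc s t, ENNReal.ofReal (f (a + u))
      = ENNReal.ofReal (cdf ν (a + t) - cdf ν (a + s)) := by
    rw [← hIoc]
    have := (measurePreserving_add_left (volume : Measure ℝ) a).setLIntegral_comp_emb
      (measurableEmbedding_addLeft a) (fun u => ENNReal.ofReal (f u)) (Set.Ioc s t)
    rw [this, add_comm a s, add_comm a t]
    simp
  have hint := setLIntegral_mono' (μ := volume) measurableSet_Ioc hpt
  rw [lintegral_const_mul' _ _ ENNReal.ofReal_ne_top, hIoc, hshift, ← ENNReal.ofReal_mul hGa,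
    ENNReal.ofReal_le_ofReal_iff (by linarith [monotone_cdf ν (show a + s ≤ a + t by linarith)])]
    at hint
  simp only [hφ] at hsφ
  nlinarith

lemma blv_main {Ω : Type*} [MeasurableSpace Ω] (μ : Measure Ω) [IsProbabilityMeasure μ]
    (X : Ω → ℝ) (hX : Measurable X) (hnn : ∀ ω, 0 ≤ X ω) (hint : Integrable X μ)
    (hM : IsMHR μ X) (ε : ℝ) (hε : 0 < ε) (hε' : ε < 1 / 16) :
    tailCon μ X (Real.logb 2 (1 / ε) * alphaQ μ X (Real.sqrt 2)) ≤
        6 * Real.sqrt ε * Real.logb 2 (1 / ε) * alphaQ μ X (Real.sqrt 2) := by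
  obtain ⟨f, hf, hmap, hh⟩ := hM
  obtain ⟨ν, hνdef⟩ : ∃ ν, ν = Measure.map X μ := ⟨_, rfl⟩
  have hprob : IsProbabilityMeasure ν := hνdef ▸ Measure.isProbabilityMeasure_map hX.aemeasurable
  have hν := hνdef.trans hmap
  have hna : NullSingletonClass ν := by
    constructor
    intro x
    rw [hν]
    exact withDensity_absolutelyContinuous _ _ (measure_singleton x)
  have hcdf : ∀ x, (μ {ω | X ω ≤ x}).toReal = cdf ν x := by
    intro x
    rw [cdf_eq_real, measureReal_def, hνdef, Measure.map_apply hX measurableSet_Iic]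
    rfl
  simp only [hcdf] at hh
  have hc := blv_cdf_continuous ν
  have hneg : ν (Set.Iio 0) = 0 := by
    rw [hνdef, Measure.map_apply hX measurableSet_Iio]
    convert measure_empty (μ := μ)
    ext ω
    simp [hnn ω]
  have h0 : cdf ν 0 = 0 := by
    rw [cdf_eq_real, measureReal_def, ← measure_congr Iio_ae_eq_Iic, hneg]; rfl
  have nbu := blv_nbu ν hneg f hf hν hc hh h0
  set G : ℝ → ℝ := fun x => 1 - cdf ν x with hG
  have hGc : Continuous G := by fun_prop
  have hG0 : ∀ x, 0 ≤ G x := fun x => by simp only [hG]; linarith [cdf_le_one ν x]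
  have hG1 : ∀ x, G x ≤ 1 := fun x => by simp only [hG]; linarith [cdf_nonneg ν x]
  have hGanti : Antitone G := fun x y h => by simp only [hG]; linarith [monotone_cdf ν h]
  have hIoi : ∀ x, ν (Set.Ioi x) = ENNReal.ofReal (G x) := by
    intro x
    rw [← Set.compl_Iic, prob_compl_eq_one_sub measurableSet_Iic, ← ofReal_cdf,
      ENNReal.ofReal_sub _ (cdf_nonneg _ _), ENNReal.ofReal_one]
  have hlt : ∀ x, μ {ω | x < X ω} = ENNReal.ofReal (G x) := by
    intro x
    rw [← hIoi, hνdef, Measure.map_apply hX measurableSet_Ioi]; rfl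
  have hle : ∀ x, μ {ω | x ≤ X ω} = ENNReal.ofReal (G x) := by
    intro x
    rw [← hIoi, measure_congr Ioi_ae_eq_Ici, hνdef, Measure.map_apply hX measurableSet_Ici]; rfl
  -- quantile
  set β := alphaQ μ X (Real.sqrt 2) with hβ
  have h2 : (0:ℝ) < Real.sqrt 2 := by positivity
  have h22 : Real.sqrt 2 * Real.sqrt 2 = 2 := Real.mul_self_sqrt (by norm_num)
  have hset : {τ : ℝ | ENNReal.ofReal (1 / Real.sqrt 2) ≤ μ {ω | τ < X ω}}
      = {τ | 1 / Real.sqrt 2 ≤ G τ} := by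
    ext τ
    simp only [Set.mem_ofPred_eq, hlt]
    exact ENNReal.ofReal_le_ofReal_iff (hG0 τ)
  have hbdd : BddAbove {τ | 1 / Real.sqrt 2 ≤ G τ} := by
    have : Filter.Tendsto G Filter.atTop (nhds (1 - 1)) := (tendsto_cdf_atTop ν).const_sub 1
    have := this.eventually_lt_const (show (1:ℝ) - 1 < 1 / Real.sqrt 2 by simp)
    obtain ⟨M, hM⟩ := this.exists
    refine ⟨M, fun τ hτ => ?_⟩
    by_contra hcon
    have := hGanti (not_le.1 hcon).le
    simp only [Set.mem_ofPred_eq] at hτ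
    linarith
  have hsq1 : 1 / Real.sqrt 2 ≤ 1 := by
    rw [div_le_one h2]; exact Real.one_le_sqrt.2 (by norm_num)
  have hβ0 : 0 ≤ β := by
    rw [hβ, alphaQ, hset]
    exact le_csSup hbdd (by simp only [Set.mem_ofPred_eq, hG, h0]; linarith)
  have hGβ : G β ≤ 1 / Real.sqrt 2 := by
    have hev : ∀ τ ∈ Set.Ioi β, G τ ≤ 1 / Real.sqrt 2 := by
      intro τ hτ
      by_contra hcon
      have : τ ≤ β := by
        rw [hβ, alphaQ, hset]
        exact le_csSup hbdd (not_le.1 hcon).le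
      exact absurd hτ (not_lt.2 this)
    have ht : Filter.Tendsto G (nhdsWithin β (Set.Ioi β)) (nhds (G β)) :=
      hGc.continuousAt.tendsto.mono_left nhdsWithin_le_nhds
    exact le_of_tendsto ht (Filter.eventually_of_mem self_mem_nhdsWithin hev)
  -- excess bound
  have hexc : ∀ a, 0 ≤ a → ∫ ω, max (X ω - a) 0 ∂μ ≤ G a * ∫ ω, X ω ∂μ := by
    intro a ha
    have hm : Measurable (fun ω => max (X ω - a) 0) := by fun_prop
    have hm0 : 0 ≤ᵐ[μ] (fun ω => max (X ω - a) 0) :=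
      Filter.Eventually.of_forall fun ω => le_max_right _ _
    rw [integral_eq_lintegral_of_nonneg_ae hm0
      hm.aestronglyMeasurable]
    apply ENNReal.toReal_le_of_le_ofReal (mul_nonneg (hG0 a) (integral_nonneg hnn))
    rw [lintegral_eq_lintegral_meas_lt μ hm0
      hm.aemeasurable, ENNReal.ofReal_mul (hG0 a),
      ofReal_integral_eq_lintegral_ofReal hint (Filter.Eventually.of_forall hnn),
      lintegral_eq_lintegral_meas_lt μ (Filter.Eventually.of_forall hnn) hX.aemeasurable,
      ← lintegral_const_mul' _ _ ENNReal.ofReal_ne_top]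
    apply setLIntegral_mono' measurableSet_Ioi
    intro t ht
    have ht' : 0 < t := ht
    have hs : {ω | t < max (X ω - a) 0} = {ω | a + t < X ω} := by
      ext ω
      simp only [Set.mem_ofPred_eq, lt_max_iff]
      constructor
      · rintro (h | h) <;> linarith
      · intro h; left; linarith
    rw [hs, hlt, hlt, ← ENNReal.ofReal_mul (hG0 a)]
    exact ENNReal.ofReal_le_ofReal (nbu a t ha ht'.le)
  have hmint : ∀ a, Integrable (fun ω => max (X ω - a) 0) μ := fun a =>
    (hint.sub (integrable_const a)).pos_part
  set E := ∫ ω, X ω ∂μ with hE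
  have hE0 : 0 ≤ E := integral_nonneg hnn
  have hEβ : E ≤ β + 1 / Real.sqrt 2 * E := by
    have h1 : E ≤ ∫ ω, (β + max (X ω - β) 0) ∂μ := by
      apply integral_mono hint ((integrable_const β).add (hmint β))
      intro ω
      simp only [Pi.add_apply]
      linarith [le_max_left (X ω - β) 0]
    rw [integral_add (integrable_const β) (hmint β)] at h1
    simp only [integral_const, probReal_univ, one_smul] at h1
    have := hexc β hβ0
    have := mul_le_mul_of_nonneg_right hGβ hE0
    linarith
  -- tail
  have htail : ∀ a, 0 ≤ a → tailCon μ X a ≤ G a * (a + E) := by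
    intro a ha
    have hms : MeasurableSet {ω | a ≤ X ω} := measurableSet_le measurable_const hX
    have h1 : tailCon μ X a ≤ ∫ ω, ({ω | a ≤ X ω}.indicator (fun _ => a) ω + max (X ω - a) 0) ∂μ := by
      rw [tailCon, ← integral_indicator hms]
      apply integral_mono (hint.indicator hms)
        (((integrable_const a).indicator hms).add (hmint a))
      intro ω
      by_cases h : a ≤ X ω
      · have := le_max_left (X ω - a) 0
        simp only [Pi.add_apply, Set.indicator, Set.mem_ofPred_eq, h, if_true]
        linarith
      · simp [Set.indicator, h]
    rw [integral_add ((integrable_const a).indicator hms) (hmint a),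
      integral_indicator_const _ hms, measureReal_def, hle, ENNReal.toReal_ofReal (hG0 a),
      smul_eq_mul] at h1
    linarith [hexc a ha]
  have hpow : ∀ n : ℕ, G (n * β) ≤ (1 / Real.sqrt 2) ^ n := by
    intro n
    induction n with
    | zero => simpa using hG1 0
    | succ n ih =>
      have := nbu (n * β) β (by positivity) hβ0
      calc G ((n + 1 : ℕ) * β) = G (n * β + β) := by push_cast; ring_nf
        _ ≤ G (n * β) * G β := this
        _ ≤ (1 / Real.sqrt 2) ^ n * (1 / Real.sqrt 2) :=
          mul_le_mul ih hGβ (hG0 _) (by positivity)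
        _ = _ := by rw [pow_succ]
  set L := Real.logb 2 (1 / ε) with hL
  have hL4 : 4 ≤ L := by
    rw [hL, Real.le_logb_iff_rpow_le (by norm_num) (by positivity), le_div_iff₀ hε]
    norm_num
    linarith
  have hGL : G (L * β) ≤ Real.sqrt 2 * Real.sqrt ε := by
    have hfl := Nat.floor_le (show 0 ≤ L by linarith)
    have hfl2 := Nat.lt_floor_add_one L
    calc G (L * β) ≤ G (⌊L⌋₊ * β) := hGanti (mul_le_mul_of_nonneg_right hfl hβ0)
      _ ≤ (1 / Real.sqrt 2) ^ ⌊L⌋₊ := hpow _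
      _ = (1 / Real.sqrt 2) ^ (⌊L⌋₊ : ℝ) := (Real.rpow_natCast _ _).symm
      _ ≤ (1 / Real.sqrt 2) ^ (L - 1) :=
        Real.rpow_le_rpow_of_exponent_ge (by positivity) hsq1 (by linarith)
      _ = Real.sqrt 2 * Real.sqrt ε := by
        have e1 : (2:ℝ) ^ L = 1 / ε :=
          Real.rpow_logb (by norm_num) (by norm_num) (by positivity)
        have e2 : (1 / Real.sqrt 2) ^ L = Real.sqrt ε := by
          rw [one_div, Real.inv_rpow h2.le, Real.sqrt_eq_rpow, ← Real.rpow_mul (by norm_num),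
            mul_comm, Real.rpow_mul (by norm_num), e1, ← Real.sqrt_eq_rpow, one_div,
            Real.sqrt_inv, inv_inv]
        rw [Real.rpow_sub (by positivity), e2, Real.rpow_one]
        field_simp
  have hs_lt : Real.sqrt 2 ≤ 1.415 := by
    rw [Real.sqrt_le_left (by norm_num)]; norm_num
  have hE4 : E ≤ 4 * β := by
    have : 1 / Real.sqrt 2 ≤ 3 / 4 := by
      rw [div_le_div_iff₀ h2 (by norm_num)]
      nlinarith
    nlinarith [mul_le_mul_of_nonneg_right this hE0]
  have hLβ : 0 ≤ L * β := by positivity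
  have hε0 := Real.sqrt_nonneg ε
  calc tailCon μ X (L * β) ≤ G (L * β) * (L * β + E) := htail _ hLβ
    _ ≤ (Real.sqrt 2 * Real.sqrt ε) * (L * β + L * β) := by
      apply mul_le_mul hGL _ (by positivity) (by positivity)
      have := mul_le_mul_of_nonneg_right hL4 hβ0
      linarith
    _ = 2 * Real.sqrt 2 * (Real.sqrt ε * (L * β)) := by ring
    _ ≤ 6 * (Real.sqrt ε * (L * β)) :=
      mul_le_mul_of_nonneg_right (by linarith) (by positivity)
    _ = _ := by ring

/-- For nonnegative continuous MHR random variables `X_1, …, X_k` with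
`k = 2^K ≥ 2` and finite expectations, if `β₂` is the second output of Algorithm 1 and `i*`
the surviving index, then for every `ε ∈ (0, 1/16)`:
`Con[X_{i*} ≥ log₂(1/ε)·β₂] ≤ 6·√ε·log₂(1/ε)·β₂`. -/
theorem bounding_last_variable
    {Ω : Type*} [MeasurableSpace Ω] (μ : Measure Ω) [IsProbabilityMeasure μ]
    (K : ℕ) (hK : 1 ≤ K)
    (X : Fin (2 ^ K) → Ω → ℝ)
    (hmeas : ∀ i, Measurable (X i))
    (hnonneg : ∀ i ω, 0 ≤ X i ω)
    (hint : ∀ i, Integrable (X i) μ)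
    (hMHR : ∀ i, IsMHR μ (X i))
    (Q : ℕ → Finset (Fin (2 ^ K))) (βt : ℕ → ℝ) (istar : Fin (2 ^ K)) (β₁ β₂ : ℝ)
    (hrun : AlgoRun μ K X Q βt istar β₁ β₂) :
    ∀ ε : ℝ, 0 < ε → ε < 1 / 16 →
      tailCon μ (X istar) (Real.logb 2 (1 / ε) * β₂) ≤
        6 * Real.sqrt ε * Real.logb 2 (1 / ε) * β₂ := by
  intro ε hε hε'
  obtain ⟨-, -, -, -, rfl⟩ := hrun
  exact blv_main μ (X istar) (hmeas istar) (hnonneg istar) (hint istar) (hMHR istar) ε hε hε'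
end

section
/- Let f : 2^{[n]} → ℝ be a submodular set function with f(∅) ≥ 0, let k ≤ n be a positive integer and let ε ∈ [0,1] be such that (1−ε)k is an integer. Then max_{S ⊆ [n], |S| ≤ (1−ε)k} f(S) ≥ (1−ε) · max_{S ⊆ [n], |S| ≤ k} f(S). -/
theorem sbr_sum {n : ℕ} (f : Finset (Fin n) → ℝ)
    (hsub : ∀ S T : Finset (Fin n), S ⊆ T → ∀ v ∉ T,
      f (insert v T) - f T ≤ f (insert v S) - f S) (S : Finset (Fin n)) :
    ∀ U : Finset (Fin n), U ⊆ S → ∑ v ∈ U, (f S - f (S.erase v)) ≤ f U - f ∅ := by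
  intro U
  induction U using Finset.induction_on with
  | empty => simp
  | insert v U hv ih =>
    intro hU
    have hvS : v ∈ S := hU (Finset.mem_insert_self v U)
    have hUS : U ⊆ S := (Finset.subset_insert v U).trans hU
    rw [Finset.sum_insert hv]
    have h1 := hsub U (S.erase v) (Finset.subset_erase.2 ⟨hUS, hv⟩) v (Finset.notMem_erase v S)
    rw [Finset.insert_erase hvS] at h1
    have h2 := ih hUS
    linarith

theorem sbr_step {n : ℕ} (f : Finset (Fin n) → ℝ) (hf0 : 0 ≤ f ∅)
    (hsub : ∀ S T : Finset (Fin n), S ⊆ T → ∀ v ∉ T,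
      f (insert v T) - f T ≤ f (insert v S) - f S) (S : Finset (Fin n)) (hS : S.Nonempty) :
    ∃ v ∈ S, ((S.card : ℝ) - 1) * f S ≤ S.card * f (S.erase v) := by
  by_contra! h
  have h1 := sbr_sum f hsub S S (Finset.Subset.refl S)
  have hpos : (0 : ℝ) < S.card := by exact_mod_cast hS.card_pos
  have h2 : ∑ v ∈ S, f S < ∑ v ∈ S, S.card * (f S - f (S.erase v)) := by
    apply Finset.sum_lt_sum_of_nonempty hS
    intro v hv
    have := h v hv
    linarith
  rw [← Finset.mul_sum, Finset.sum_const, nsmul_eq_mul] at h2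
  have h3 := lt_of_mul_lt_mul_left h2 hpos.le
  linarith

theorem sbr_main {n : ℕ} (f : Finset (Fin n) → ℝ) (hf0 : 0 ≤ f ∅)
    (hsub : ∀ S T : Finset (Fin n), S ⊆ T → ∀ v ∉ T,
      f (insert v T) - f T ≤ f (insert v S) - f S) (j : ℕ) (hj : 0 < j) (d : ℕ) :
    ∀ S : Finset (Fin n), S.card = j + d →
      ∃ T : Finset (Fin n), T.card = j ∧ (j : ℝ) * f S ≤ ((j : ℝ) + d) * f T := by
  induction d with
  | zero => intro S hS; exact ⟨S, by simpa using hS, by simp⟩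
  | succ d ih =>
    intro S hS
    have hne : S.Nonempty := Finset.card_pos.1 (by omega)
    obtain ⟨v, hv, h⟩ := sbr_step f hf0 hsub S hne
    obtain ⟨T, hT, h'⟩ := ih (S.erase v) (by rw [Finset.card_erase_of_mem hv]; omega)
    refine ⟨T, hT, ?_⟩
    rw [hS] at h
    push_cast at h ⊢
    have hj' : (0 : ℝ) < j := by exact_mod_cast hj
    have hd : (0 : ℝ) ≤ d := Nat.cast_nonneg d
    have hp : (0 : ℝ) < j + d := by linarith
    have e1 := mul_le_mul_of_nonneg_left h hj'.le
    have e2 := mul_le_mul_of_nonneg_left h' (show (0 : ℝ) ≤ j + (d + 1) by linarith)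
    refine le_of_mul_le_mul_left ?_ hp
    linarith

/-- For a submodular set function `f` on `[n]` with `f(∅) ≥ 0`, a positive
integer `k ≤ n`, and `ε ∈ [0,1]` with `(1-ε)k` an integer `m`:
`max_{|S| ≤ m} f(S) ≥ (1-ε) · max_{|S| ≤ k} f(S)`. -/
theorem submodular_budget_reduction
    (n k : ℕ) (hk : 0 < k) (hkn : k ≤ n)
    (f : Finset (Fin n) → ℝ)
    (hf0 : 0 ≤ f ∅)
    (hsub : ∀ S T : Finset (Fin n), S ⊆ T → ∀ v ∉ T,
      f (insert v T) - f T ≤ f (insert v S) - f S)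
    (ε : ℝ) (hε0 : 0 ≤ ε) (hε1 : ε ≤ 1)
    (m : ℕ) (hm : (m : ℝ) = (1 - ε) * k) :
    ∀ S : Finset (Fin n), S.card ≤ k →
      ∃ T : Finset (Fin n), T.card ≤ m ∧ (1 - ε) * f S ≤ f T := by
  intro S hS
  have hk' : (0 : ℝ) < k := by exact_mod_cast hk
  by_cases hfS : f S ≤ 0
  · exact ⟨∅, by simp, (mul_nonpos_of_nonneg_of_nonpos (by linarith) hfS).trans hf0⟩
  push Not at hfS
  by_cases hSm : S.card ≤ m
  · exact ⟨S, hSm, by nlinarith⟩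
  push Not at hSm
  rcases Nat.eq_zero_or_pos m with h0 | h0
  · refine ⟨∅, by simp, ?_⟩
    subst h0
    have : (1 - ε) = 0 := by
      rw [Nat.cast_zero] at hm
      rcases mul_eq_zero.1 hm.symm with h | h
      · exact h
      · exact absurd h hk'.ne'
    rw [this]; simpa using hf0
  obtain ⟨T, hT, h⟩ := sbr_main f hf0 hsub m h0 (S.card - m) S (by omega)
  refine ⟨T, hT.le, ?_⟩
  rw [Nat.cast_sub hSm.le, add_sub_cancel] at h
  have hm' : (0 : ℝ) < m := by exact_mod_cast h0
  have hs : (0 : ℝ) ≤ S.card := Nat.cast_nonneg _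
  have hT0 : 0 < f T := pos_of_mul_pos_right (lt_of_lt_of_le (mul_pos hm' hfS) h) hs
  have hSk : (S.card : ℝ) ≤ k := by exact_mod_cast hS
  have h2 := mul_le_mul_of_nonneg_right hSk hT0.le
  refine le_of_mul_le_mul_left ?_ hk'
  rw [hm] at h
  linarith
end

section
/- Let Y_1, …, Y_n be nonnegative random variables with finite expectations, let ε ∈ (0,1), τ > 0, and k ≤ n a positive integer, and let W_i = Y_i · 1{Y_i ≥ ε²τ} for each i. For a family Z = (Z_1,…,Z_n) write OPT_max(Z) = max_{S ⊆ [n], |S| = k} E[max_{i∈S} Z_i]. If there exists S₀ ⊆ [n] with |S₀| = k such that Pr[max_{i∈S₀} W_i ≥ τ] ≥ ε, then (1+ε) · OPT_max(W) ≥ OPT_max(Y). -/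
open MeasureTheory

theorem fmax_nonneg' {ι : Type*} (s : Finset ι) (v : ι → ℝ) : 0 ≤ fmax s v := by
  classical
  induction s using Finset.induction_on with
  | empty => simp [fmax]
  | insert a s ha ih =>
    unfold fmax at *
    rw [Finset.fold_insert ha]
    exact le_max_of_le_right ih

theorem fmax_le_add {ι : Type*} (s : Finset ι) (v w : ι → ℝ) (c : ℝ) (hc : 0 ≤ c)
    (h : ∀ i, v i ≤ w i + c) : fmax s v ≤ fmax s w + c := by
  classical
  induction s using Finset.induction_on with
  | empty => simpa [fmax] using hc
  | insert a s ha ih =>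
    unfold fmax at *
    rw [Finset.fold_insert ha, Finset.fold_insert ha]
    apply max_le
    · exact (h a).trans (by gcongr; exact le_max_left _ _)
    · exact ih.trans (by gcongr; exact le_max_right _ _)

theorem fmax_integrable {ι Ω : Type*} [MeasurableSpace Ω] (μ : Measure Ω) (s : Finset ι)
    (X : ι → Ω → ℝ) (h : ∀ i, Integrable (X i) μ) :
    Integrable (fun ω => fmax s (fun i => X i ω)) μ := by
  classical
  induction s using Finset.induction_on with
  | empty => simp [fmax]
  | insert a s ha ih =>
    unfold fmax at *
    simp only [Finset.fold_insert ha]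
    exact (h a).sup ih

/-- Let `W_i = Y_i · 1{Y_i ≥ ε²τ}` (discarding small values).  If some
size-`k` set `S₀` satisfies `Pr[max_{i∈S₀} W_i ≥ τ] ≥ ε`, then
`(1+ε) · OPT_max(W) ≥ OPT_max(Y)`, i.e. for every size-`k` set `S` there is a size-`k` set
`T` with `E[max_{i∈S} Y_i] ≤ (1+ε) · E[max_{i∈T} W_i]`. -/
theorem discarding_small_values
    {Ω : Type*} [MeasurableSpace Ω] (μ : Measure Ω) [IsProbabilityMeasure μ]
    (n k : ℕ) (hk : 0 < k) (hkn : k ≤ n)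
    (Y : Fin n → Ω → ℝ)
    (hmeas : ∀ i, Measurable (Y i))
    (hnonneg : ∀ i ω, 0 ≤ Y i ω)
    (hint : ∀ i, Integrable (Y i) μ)
    (ε τ : ℝ) (hε0 : 0 < ε) (hε1 : ε < 1) (hτ : 0 < τ)
    (W : Fin n → Ω → ℝ)
    (hW : ∀ i ω, W i ω = if ε ^ 2 * τ ≤ Y i ω then Y i ω else 0)
    (S₀ : Finset (Fin n)) (hS₀card : S₀.card = k)
    (hS₀ : ENNReal.ofReal ε ≤ μ {ω | τ ≤ fmax S₀ (fun i => W i ω)}) :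
    ∀ S : Finset (Fin n), S.card = k →
      ∃ T : Finset (Fin n), T.card = k ∧
        ∫ ω, fmax S (fun i => Y i ω) ∂μ ≤ (1 + ε) * ∫ ω, fmax T (fun i => W i ω) ∂μ := by
  intro S hS
  have hc : 0 < ε ^ 2 * τ := by positivity
  have hWint : ∀ i, Integrable (W i) μ := by
    intro i
    have : W i = Set.indicator {ω | ε ^ 2 * τ ≤ Y i ω} (Y i) := by
      funext ω
      simp [hW, Set.indicator_apply]
    rw [this]
    exact (hint i).indicator (measurableSet_le measurable_const (hmeas i))
  have hA : ∫ ω, fmax S (fun i => Y i ω) ∂μ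
      ≤ ∫ ω, fmax S (fun i => W i ω) ∂μ + ε ^ 2 * τ := by
    have h1 : ∫ ω, fmax S (fun i => Y i ω) ∂μ
        ≤ ∫ ω, (fmax S (fun i => W i ω) + ε ^ 2 * τ) ∂μ := by
      apply integral_mono (fmax_integrable μ S Y hint)
        ((fmax_integrable μ S W hWint).add (integrable_const _))
      intro ω
      apply fmax_le_add _ _ _ _ hc.le
      intro i
      rw [hW]
      split_ifs with h
      · linarith
      · push Not at h
        linarith
    rw [integral_add (fmax_integrable μ S W hWint) (integrable_const _)] at h1
    simpa using h1
  have hB : ε * τ ≤ ∫ ω, fmax S₀ (fun i => W i ω) ∂μ := by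
    have h1 := mul_meas_ge_le_integral_of_nonneg (μ := μ)
      (Filter.Eventually.of_forall (fun ω => fmax_nonneg' S₀ (fun i => W i ω)))
      (fmax_integrable μ S₀ W hWint) τ
    have h2 : ε ≤ μ.real {ω | τ ≤ fmax S₀ (fun i => W i ω)} :=
      (ENNReal.ofReal_le_iff_le_toReal (measure_ne_top _ _)).1 hS₀
    nlinarith
  rcases le_total (∫ ω, fmax S (fun i => W i ω) ∂μ) (∫ ω, fmax S₀ (fun i => W i ω) ∂μ) with h | h
  · exact ⟨S₀, hS₀card, by nlinarith⟩
  · exact ⟨S, hS, by nlinarith⟩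
end
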